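/- Let (X,𝓑,T,μ) be an ergodic measure-preserving dynamical system and f : X → ℝ a measurable function (not assumed integrable). Suppose that for μ-almost every x ∈ X one has lim_{n→∞} n^{−1} S_n f(x) = 0, where S_n f(x) = Σ_{k=0}^{n−1} f(T^k x). Then for every b > 0, τ_b(x) = inf{n ≥ 1 : S_n f(x) ∈ [−b,b]} is finite for μ-almost every x ∈ X. -/

import Mathlib

open MeasureTheory Filter Set

lemma aux_count (S : ℕ → ℝ) (F : Finset ℕ) (b M : ℝ) (hb : 0 < b) (hM0 : 0 ≤ M)
    (hM : ∀ i ∈ F, |S i| ≤ M)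
    (hsep : ∀ i ∈ F, ∀ j ∈ F, i < j → b < |S j - S i|) :
    (F.card : ℝ) ≤ 2 * M / b + 2 := by
  have hle : F.card ≤ (Finset.Icc ⌊-M / b⌋ ⌊M / b⌋).card := by
    apply Finset.card_le_card_of_injOn (fun i => ⌊S i / b⌋)
    · intro i hi
      have := abs_le.1 (hM i hi)
      simp only [Finset.coe_Icc, Set.mem_Icc]
      constructor <;> apply Int.floor_le_floor <;> gcongr <;> linarith
    · have key : ∀ i ∈ F, ∀ j ∈ F, i < j → ⌊S i / b⌋ ≠ ⌊S j / b⌋ := by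
        intro i hi j hj hij h
        have h1 := Int.abs_sub_lt_one_of_floor_eq_floor h
        have h2 := hsep i hi j hj hij
        rw [← sub_div, abs_div, abs_of_pos hb, div_lt_one hb, abs_sub_comm] at h1
        linarith
      intro i hi j hj h
      rcases lt_trichotomy i j with hij | hij | hij
      · exact absurd h (key i hi j hj hij)
      · exact hij
      · exact absurd h.symm (key j hj i hi hij)
  rw [Int.card_Icc] at hle
  have h1 : ⌊-M / b⌋ ≤ ⌊M / b⌋ := by
    apply Int.floor_le_floor; gcongr; linarith
  have h2 : ((F.card : ℕ) : ℤ) ≤ ⌊M / b⌋ + 1 - ⌊-M / b⌋ := by omega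
  have h3 : (F.card : ℝ) ≤ (⌊M / b⌋ : ℝ) + 1 - (⌊-M / b⌋ : ℝ) := by exact_mod_cast h2
  have h4 := Int.floor_le (M / b)
  have h5 := Int.lt_floor_add_one (-M / b)
  have h6 : 2 * M / b = M / b - (-M / b) := by ring
  linarith

lemma aux_lim (S : ℕ → ℝ) (P : ℕ → Prop) [DecidablePred P] (b : ℝ) (hb : 0 < b)
    (hS0 : S 0 = 0)
    (h0 : Tendsto (fun n : ℕ => S n / (n : ℝ)) atTop (nhds 0))
    (hsep : ∀ i j, P i → i < j → b < |S j - S i|) :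
    Tendsto (fun n : ℕ => (((Finset.range n).filter P).card : ℝ) / (n : ℝ)) atTop (nhds 0) := by
  rw [Metric.tendsto_atTop] at h0 ⊢
  intro ε hε
  obtain ⟨N, hN⟩ := h0 (ε * b / 4) (by positivity)
  set C : ℝ := ∑ i ∈ Finset.range N, |S i| with hC
  have hC0 : 0 ≤ C := Finset.sum_nonneg fun _ _ => abs_nonneg _
  obtain ⟨K, hK⟩ := exists_nat_gt ((2 * C / b + 2) / (ε / 2))
  refine ⟨K + 1, fun n hn => ?_⟩
  have hn0 : (0 : ℝ) < n := by exact_mod_cast (by omega : 0 < n)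
  have hKn : (K : ℝ) ≤ n := by exact_mod_cast (by omega : K ≤ n)
  have hc := aux_count S ((Finset.range n).filter P) b (C + ε * b / 4 * n) hb (by positivity)
    (by
      intro i hi
      have hin : i < n := by simpa using (Finset.mem_filter.1 hi).1
      have hin' : (i : ℝ) ≤ n := by exact_mod_cast hin.le
      by_cases hiN : i < N
      · have : |S i| ≤ C := Finset.single_le_sum (f := fun i => |S i|)
          (fun _ _ => abs_nonneg _) (Finset.mem_range.2 hiN)
        have : 0 ≤ ε * b / 4 * n := by positivity
        linarith
      · rcases Nat.eq_zero_or_pos i with h | h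
        · rw [h, hS0, abs_zero]; positivity
        · have hi0 : (0 : ℝ) < i := by exact_mod_cast h
          have := hN i (by omega)
          rw [Real.dist_eq, sub_zero, abs_div, abs_of_pos hi0, div_lt_iff₀ hi0] at this
          have : ε * b / 4 * i ≤ ε * b / 4 * n := by gcongr
          linarith)
    (fun i hi j _ hij => hsep i j (Finset.mem_filter.1 hi).2 hij)
  rw [Real.dist_eq, sub_zero, abs_of_nonneg (by positivity), div_lt_iff₀ hn0]
  rw [div_lt_iff₀ (by positivity)] at hK
  have e : 2 * (C + ε * b / 4 * n) / b = 2 * C / b + ε / 2 * n := by field_simp; ring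
  have : (K : ℝ) * (ε / 2) ≤ n * (ε / 2) := by gcongr
  rw [e] at hc
  linarith

/-- **Dekking-type recurrence of Birkhoff sums with zero mean.**
Let `(X, 𝓑, T, μ)` be an ergodic measure-preserving dynamical system and `f : X → ℝ` a
measurable function (not assumed integrable). If for `μ`-almost every `x` the Birkhoff
averages `n⁻¹ Sₙf(x)` tend to `0`, then for every `b > 0`, the hitting time
`τ_b(x) = inf {n ≥ 1 : Sₙf(x) ∈ [-b, b]}` is finite for `μ`-almost every `x`. -/
theorem birkhoff_sum_recurrence
    {X : Type*} [MeasurableSpace X] (μ : Measure X) [IsProbabilityMeasure μ]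
    (T : X → X) (hT : Ergodic T μ)
    (f : X → ℝ) (hf : Measurable f)
    (h0 : ∀ᵐ x ∂μ, Tendsto
      (fun n : ℕ => (∑ k ∈ Finset.range n, f (T^[k] x)) / (n : ℝ)) atTop (nhds 0)) :
    ∀ b : ℝ, 0 < b →
      ∀ᵐ x ∂μ, ∃ n : ℕ, 1 ≤ n ∧ (∑ k ∈ Finset.range n, f (T^[k] x)) ∈ Set.Icc (-b) b := by
  intro b hb
  classical
  set S : ℕ → X → ℝ := fun n x => ∑ k ∈ Finset.range n, f (T^[k] x) with hS
  have hTm : Measurable T := hT.measurable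
  have hSm : ∀ n, Measurable (S n) := fun n =>
    Finset.measurable_sum _ fun k _ => hf.comp (hTm.iterate k)
  set A : Set X := {x | ∀ n : ℕ, 1 ≤ n → b < |S n x|} with hA
  have hAm : MeasurableSet A := by
    have : A = ⋂ n : ℕ, ⋂ _ : 1 ≤ n, {x | b < |S n x|} := by ext x; simp [hA]
    rw [this]
    refine MeasurableSet.iInter fun n => MeasurableSet.iInter fun _ => ?_
    exact measurableSet_lt measurable_const (continuous_abs.measurable.comp (hSm n))
  have hadd : ∀ i m x, S (i + m) x = S i x + S m (T^[i] x) := by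
    intro i m x
    simp only [hS, Finset.sum_range_add]
    congr 1
    refine Finset.sum_congr rfl fun k _ => ?_
    rw [← Function.iterate_add_apply, add_comm]
  set g : X → ℝ := A.indicator 1 with hg
  have hgm : Measurable g := measurable_one.indicator hAm
  set G : ℕ → X → ℝ := fun n x => (∑ k ∈ Finset.range n, g (T^[k] x)) / (n : ℝ) with hG
  have hGc : ∀ n x, ∑ k ∈ Finset.range n, g (T^[k] x)
      = (((Finset.range n).filter fun k => T^[k] x ∈ A).card : ℝ) := by
    intro n x
    simp [hg, Set.indicator_apply, Finset.sum_ite]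
  have hlim : ∀ᵐ x ∂μ, Tendsto (fun n => G n x) atTop (nhds 0) := by
    filter_upwards [h0] with x hx
    simp only [hG, hGc]
    refine aux_lim (fun n => S n x) (fun k => T^[k] x ∈ A) b hb (by simp [hS]) hx ?_
    intro i j hi hij
    obtain ⟨m, rfl⟩ := Nat.exists_eq_add_of_lt hij
    have := hi (m + 1) (by omega)
    have e := hadd i (m + 1) x
    rw [← add_assoc] at e
    simpa [e] using this
  have hDCT := tendsto_integral_of_dominated_convergence (μ := μ) (F := G) (f := fun _ => 0)
    (fun _ => (1 : ℝ))
    (fun n => ((Finset.measurable_sum _ fun k _ =>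
      hgm.comp (hTm.iterate k)).div_const _).aestronglyMeasurable)
    (integrable_const _)
    (fun n => Eventually.of_forall fun x => by
      simp only [hG, hGc]
      rw [Real.norm_of_nonneg (by positivity)]
      apply div_le_one_of_le₀ _ (by positivity)
      exact_mod_cast (Finset.card_filter_le _ _).trans (by simp))
    hlim
  have hgi : Integrable g μ := (integrable_const (1 : ℝ)).indicator hAm
  have hint : ∀ n : ℕ, 1 ≤ n → ∫ x, G n x ∂μ = μ.real A := by
    intro n hn
    have hn0 : (n : ℝ) ≠ 0 := by exact_mod_cast (by omega : n ≠ 0)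
    have hk : ∀ k : ℕ, ∫ x, g (T^[k] x) ∂μ = μ.real A := by
      intro k
      have hp := hT.toMeasurePreserving.iterate k
      rw [← integral_indicator_one hAm]
      have := integral_map (μ := μ) hp.measurable.aemeasurable (f := g)
        hgm.aestronglyMeasurable
      rw [hp.map_eq] at this
      exact this.symm
    simp only [hG]
    rw [integral_div, integral_finset_sum]
    · simp only [hk]
      simp [hn0]
    · intro k _
      exact (hT.toMeasurePreserving.iterate k).integrable_comp_of_integrable hgi
  have hzero : μ.real A = 0 := by
    have h1 : Tendsto (fun n => ∫ x, G n x ∂μ) atTop (nhds (μ.real A)) :=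
      tendsto_const_nhds.congr' (by
        filter_upwards [eventually_ge_atTop 1] with n hn
        exact (hint n hn).symm)
    have := tendsto_nhds_unique h1 hDCT
    simpa using this
  have hA0 : μ A = 0 := by
    rwa [measureReal_eq_zero_iff] at hzero
  filter_upwards [measure_eq_zero_iff_ae_notMem.1 hA0] with x hx
  simp only [hA, Set.mem_setOf_eq, not_forall, not_lt] at hx
  obtain ⟨n, hn, h⟩ := hx
  exact ⟨n, hn, abs_le.1 h⟩
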